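/- arXiv:1105.3373 — 2 statements merged into one kernel-verified Lean document; each statement's English description precedes it below -/
import Mathlib

section
/- Tsirelson's theorem (finite-dimensional, POVM case): Let n be a positive integer, A, B finite nonempty sets with finite outcome sets O_x^A (x ∈ A) and O_y^B (y ∈ B). Let ρ be an n×n positive semidefinite complex matrix with trace 1, and let E^x_a, F^y_b be n×n positive semidefinite matrices satisfying ∑_a E^x_a = 1 for every x, ∑_b F^y_b = 1 for every y, and E^x_a F^y_b = F^y_b E^x_a for all a, b, x, y. Then there exist a positive integer m, positive semidefinite m×m matrices Ẽ^x_a and F̃^y_b with ∑_a Ẽ^x_a = 1 and ∑_b F̃^y_b = 1, and a positive semidefinite (m·m)×(m·m) matrix ρ' with trace 1, such that trace(ρ' · (Ẽ^x_a ⊗ₖ F̃^y_b)) = trace(ρ · E^x_a · F^y_b) for all a, b, x, y. -/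
/-!
The new model keeps the matrices `E x a`, `F y b` and the dimension, and only replaces the state.

Let `𝓑` be the commutant of the `E x a` and `𝓐` the commutant of `𝓑`, so that `E x a ∈ 𝓐` and
`F y b ∈ 𝓑`. The algebra `T = 𝓐 ⊗ 𝓑` has two `*`-representations: the Kronecker representation
`ι (a ⊗ b) = a ⊗ₖ b`, which is faithful, and the multiplication `π (a ⊗ b) = a * b`, which is a
homomorphism because `𝓐` and `𝓑` commute. It suffices to find a density matrix `σ` with
`tr (σ ι(t)) = tr (ρ π(t))` for all `t : T`; this is `exists_state_transfer`, which holds for any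
finite-dimensional `T`.

Since `(s, t) ↦ tr (ι(s t))` is a nondegenerate form on `T`, there is a unique `r : T` with
`tr (ι(r) ι(t)) = tr (ρ π(t))` for all `t`, and `σ = ι(r)` is taken. Uniqueness makes `r`
self-adjoint. If `μ` is an eigenvalue of `σ`, then `r - μ` is not invertible in `T`, so `r q = μ q`
for some `q ≠ 0` in `T`, and then `μ tr (ι(q) ι(q)ᴴ) = tr (ρ π(q) π(q)ᴴ) ≥ 0` gives `μ ≥ 0`.
-/


open Matrix
open scoped Kronecker ComplexOrder

section Transfer

variable {T : Type*} [Ring T] [StarRing T] [Algebra ℂ T]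
  {N k : Type*} [Fintype N] [DecidableEq N] [Fintype k] [DecidableEq k]

/-- The trace form of a faithful `*`-representation is nondegenerate. -/
lemma eq_zero_of_trace_mul_eq_zero (ι : T →⋆ₐ[ℂ] Matrix N N ℂ)
    (hι : Function.Injective ι) {r : T} (h : ∀ t, (ι r * ι t).trace = 0) : r = 0 := by
  have h1 := h (star r)
  rw [map_star, star_eq_conjTranspose, trace_mul_conjTranspose_self_eq_zero_iff] at h1
  exact hι (by rw [h1, map_zero])

variable [FiniteDimensional ℂ T]

/-- Every linear functional on a finite-dimensional algebra with a faithful `*`-representation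
is represented by an element of the algebra through the trace form. -/
lemma exists_trace_representative (ι : T →⋆ₐ[ℂ] Matrix N N ℂ)
    (hι : Function.Injective ι) (φ : T →ₗ[ℂ] ℂ) : ∃ r : T, ∀ t, (ι r * ι t).trace = φ t := by
  let Φ : T →ₗ[ℂ] Module.Dual ℂ T :=
    LinearMap.mk₂ ℂ (fun s t => (ι s * ι t).trace)
      (by intros; simp [add_mul]) (by intros; simp)
      (by intros; simp [mul_add]) (by intros; simp)
  have hΦ : Function.Injective Φ := by
    rw [injective_iff_map_eq_zero]
    exact fun r hr => eq_zero_of_trace_mul_eq_zero ι hι fun t => LinearMap.congr_fun hr t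
  obtain ⟨r, hr⟩ := (LinearMap.injective_iff_surjective_of_finrank_eq_finrank
    (Subspace.dual_finrank_eq (K := ℂ) (V := T)).symm).1 hΦ φ
  exact ⟨r, fun t => LinearMap.congr_fun hr t⟩

/-- An eigenvalue of `ι r` is already a left eigenvalue of `r` in the regular representation
of the finite-dimensional algebra `T`. -/
lemma exists_mul_eq_smul_of_eigenvector (ι : T →⋆ₐ[ℂ] Matrix N N ℂ) (r : T) (μ : ℂ)
    (v : N → ℂ) (hv : v ≠ 0) (h : ι r *ᵥ v = μ • v) : ∃ q : T, q ≠ 0 ∧ r * q = μ • q := by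
  by_contra! hq
  have hinj : Function.Injective (LinearMap.mulLeft ℂ (r - algebraMap ℂ T μ)) := by
    rw [injective_iff_map_eq_zero]
    intro q h0
    by_contra hne
    refine hq q hne ?_
    rwa [LinearMap.mulLeft_apply, sub_mul, sub_eq_zero, ← Algebra.smul_def] at h0
  obtain ⟨s, hs⟩ := LinearMap.injective_iff_surjective.1 hinj 1
  rw [LinearMap.mulLeft_apply] at hs
  have h1 : ι (r - algebraMap ℂ T μ) * ι s = 1 := by rw [← map_mul, hs, map_one]
  rw [mul_eq_one_comm] at h1
  apply hv
  have h2 : ι (r - algebraMap ℂ T μ) *ᵥ v = 0 := by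
    rw [map_sub, sub_mulVec, h, AlgHomClass.commutes, Algebra.algebraMap_eq_smul_one, smul_mulVec,
      one_mulVec, sub_self]
  rw [← one_mulVec v, ← h1, ← mulVec_mulVec, h2, mulVec_zero]

/-- A state pulled back along a `*`-representation `π` of `T` is also induced by a density matrix
in any faithful `*`-representation `ι` of `T`. -/
lemma exists_state_transfer (ι : T →⋆ₐ[ℂ] Matrix N N ℂ) (hι : Function.Injective ι)
    (π : T →⋆ₐ[ℂ] Matrix k k ℂ) (ρ : Matrix k k ℂ) (hρ : ρ.PosSemidef) (hρtr : ρ.trace = 1) :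
    ∃ σ : Matrix N N ℂ, σ.PosSemidef ∧ σ.trace = 1 ∧
      ∀ t, (σ * ι t).trace = (ρ * π t).trace := by
  obtain ⟨r, hr⟩ := exists_trace_representative ι hι
    (traceLinearMap k ℂ ℂ ∘ₗ LinearMap.mulLeft ℂ ρ ∘ₗ π.toAlgHom.toLinearMap)
  replace hr : ∀ t, (ι r * ι t).trace = (ρ * π t).trace := hr
  have hsa : (ι r)ᴴ = ι r := by
    have : star r - r = 0 := by
      apply eq_zero_of_trace_mul_eq_zero ι hι
      intro t
      have h1 : (ι (star r) * ι t).trace = (ρ * π t).trace := by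
        have h2 := congrArg star (hr (star t))
        rw [← trace_conjTranspose, ← trace_conjTranspose, conjTranspose_mul, conjTranspose_mul,
          hρ.1.eq, map_star, map_star, star_eq_conjTranspose, star_eq_conjTranspose,
          conjTranspose_conjTranspose, conjTranspose_conjTranspose] at h2
        rw [map_star, star_eq_conjTranspose, trace_mul_comm, h2, trace_mul_comm]
      rw [map_sub, sub_mul, trace_sub, h1, hr, sub_self]
    rw [← star_eq_conjTranspose, ← map_star, sub_eq_zero.1 this]
  have hpos : ∀ q, 0 ≤ (ι r * ι (q * star q)).trace := by
    intro q
    rw [hr, map_mul, map_star, star_eq_conjTranspose, ← mul_assoc, trace_mul_comm, ← mul_assoc]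
    exact (hρ.conjTranspose_mul_mul_same (π q)).trace_nonneg
  refine ⟨ι r, ?_, ?_, hr⟩
  · have hH : (ι r).IsHermitian := hsa
    rw [hH.posSemidef_iff_eigenvalues_nonneg]
    intro i
    obtain ⟨q, hq0, hq⟩ := exists_mul_eq_smul_of_eigenvector ι r (hH.eigenvalues i)
      (hH.eigenvectorBasis i).ofLp
      (fun h0 => hH.eigenvectorBasis.orthonormal.ne_zero i (by ext j; exact congrFun h0 j))
      (by simpa using hH.mulVec_eigenvectorBasis i)
    have h1 := hpos q
    rw [← map_mul, ← mul_assoc, hq, smul_mul_assoc, map_smul, trace_smul, map_mul, map_star,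
      star_eq_conjTranspose, smul_eq_mul] at h1
    have h2 : 0 ≤ (ι q * (ι q)ᴴ).trace := (posSemidef_self_mul_conjTranspose (ι q)).trace_nonneg
    have h3 : (ι q * (ι q)ᴴ).trace ≠ 0 := by
      rw [Ne, trace_mul_conjTranspose_self_eq_zero_iff]
      exact fun h0 => hq0 (hι (by rw [h0, map_zero]))
    have h4 : (0 : ℂ) ≤ hH.eigenvalues i :=
      le_of_mul_le_mul_right (by rwa [zero_mul]) (lt_of_le_of_ne h2 h3.symm)
    exact_mod_cast h4
  · simpa [hρtr] using hr 1

end Transfer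

section Kronecker

variable {k : Type*} [Fintype k] [DecidableEq k]

open scoped TensorProduct

/-- The faithful `*`-representation `a ⊗ b ↦ a ⊗ₖ b` of the tensor product of two matrix
`*`-algebras. -/
lemma exists_kronecker_rep (𝓐 𝓑 : StarSubalgebra ℂ (Matrix k k ℂ)) :
    ∃ ι : (𝓐 ⊗[ℂ] 𝓑) →⋆ₐ[ℂ] Matrix (k × k) (k × k) ℂ, Function.Injective ι ∧
      ∀ (a : 𝓐) (b : 𝓑), ι (a ⊗ₜ b) = (a : Matrix k k ℂ) ⊗ₖ (b : Matrix k k ℂ) := by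
  let f : (𝓐 ⊗[ℂ] 𝓑) →ₐ[ℂ] Matrix (k × k) (k × k) ℂ :=
    (kroneckerAlgEquiv k k ℂ).toAlgHom.comp
      (Algebra.TensorProduct.map 𝓐.subtype.toAlgHom 𝓑.subtype.toAlgHom)
  have hf : ∀ (a : 𝓐) (b : 𝓑), f (a ⊗ₜ b) = (a : Matrix k k ℂ) ⊗ₖ (b : Matrix k k ℂ) :=
    fun a b => by simp [f]
  refine ⟨{ f with map_star' := fun t => ?_ }, ?_, hf⟩
  · change f (star t) = star (f t)
    induction t with
    | zero => simp
    | add x y hx hy => rw [star_add, map_add, hx, hy, map_add, star_add]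
    | tmul a b =>
      rw [TensorProduct.star_tmul, hf, hf, star_eq_conjTranspose, conjTranspose_kronecker]
      rfl
  · exact (kroneckerAlgEquiv k k ℂ).injective.comp
      (TensorProduct.map_injective_of_flat_flat 𝓐.subtype.toAlgHom.toLinearMap
        𝓑.subtype.toAlgHom.toLinearMap Subtype.val_injective Subtype.val_injective)

/-- The `*`-representation `a ⊗ b ↦ a * b` of the tensor product of two commuting matrix
`*`-algebras. -/
lemma exists_mul_rep (𝓐 𝓑 : StarSubalgebra ℂ (Matrix k k ℂ))
    (hc : ∀ (a : 𝓐) (b : 𝓑), Commute (a : Matrix k k ℂ) (b : Matrix k k ℂ)) :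
    ∃ π : (𝓐 ⊗[ℂ] 𝓑) →⋆ₐ[ℂ] Matrix k k ℂ,
      ∀ (a : 𝓐) (b : 𝓑), π (a ⊗ₜ b) = (a : Matrix k k ℂ) * (b : Matrix k k ℂ) := by
  let f : (𝓐 ⊗[ℂ] 𝓑) →ₐ[ℂ] Matrix k k ℂ :=
    Algebra.TensorProduct.lift 𝓐.subtype.toAlgHom 𝓑.subtype.toAlgHom hc
  have hf : ∀ (a : 𝓐) (b : 𝓑), f (a ⊗ₜ b) = (a : Matrix k k ℂ) * (b : Matrix k k ℂ) :=
    fun a b => Algebra.TensorProduct.lift_tmul _ _ hc a b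
  refine ⟨{ f with map_star' := fun t => ?_ }, hf⟩
  change f (star t) = star (f t)
  induction t with
  | zero => simp
  | add x y hx hy => rw [star_add, map_add, hx, hy, map_add, star_add]
  | tmul a b =>
    rw [TensorProduct.star_tmul, hf, hf, (hc a b).eq, star_mul]
    rfl

end Kronecker

/-- Tsirelson's theorem (finite-dimensional, POVM case). -/
theorem tsirelson_finite_povm
    (n : ℕ) (hn : 0 < n)
    (A B : Type) [Fintype A] [Nonempty A] [Fintype B] [Nonempty B]
    (OA : A → Type) [∀ x, Fintype (OA x)] [∀ x, Nonempty (OA x)]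
    (OB : B → Type) [∀ y, Fintype (OB y)] [∀ y, Nonempty (OB y)]
    (ρ : Matrix (Fin n) (Fin n) ℂ) (hρ : ρ.PosSemidef) (hρtr : ρ.trace = 1)
    (E : ∀ x : A, OA x → Matrix (Fin n) (Fin n) ℂ)
    (F : ∀ y : B, OB y → Matrix (Fin n) (Fin n) ℂ)
    (hE : ∀ x a, (E x a).PosSemidef)
    (hF : ∀ y b, (F y b).PosSemidef)
    (hEsum : ∀ x, ∑ a, E x a = 1)
    (hFsum : ∀ y, ∑ b, F y b = 1)
    (hcomm : ∀ x a y b, E x a * F y b = F y b * E x a) :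
    ∃ (m : ℕ), 0 < m ∧
      ∃ (E' : ∀ x : A, OA x → Matrix (Fin m) (Fin m) ℂ)
        (F' : ∀ y : B, OB y → Matrix (Fin m) (Fin m) ℂ)
        (ρ' : Matrix (Fin m × Fin m) (Fin m × Fin m) ℂ),
        (∀ x a, (E' x a).PosSemidef) ∧
        (∀ y b, (F' y b).PosSemidef) ∧
        (∀ x, ∑ a, E' x a = 1) ∧
        (∀ y, ∑ b, F' y b = 1) ∧
        ρ'.PosSemidef ∧ ρ'.trace = 1 ∧
        (∀ x a y b,
          (ρ' * (E' x a ⊗ₖ F' y b)).trace = (ρ * E x a * F y b).trace) := by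
  let SE : Set (Matrix (Fin n) (Fin n) ℂ) := {M | ∃ x a, M = E x a}
  let 𝓑 : StarSubalgebra ℂ (Matrix (Fin n) (Fin n) ℂ) := StarSubalgebra.centralizer ℂ SE
  let 𝓐 : StarSubalgebra ℂ (Matrix (Fin n) (Fin n) ℂ) :=
    StarSubalgebra.centralizer ℂ (𝓑 : Set (Matrix (Fin n) (Fin n) ℂ))
  have hE𝓐 : ∀ x a, E x a ∈ 𝓐 := by
    intro x a
    rw [StarSubalgebra.mem_centralizer_iff]
    intro g hg
    have h1 : ∀ g ∈ 𝓑, g * E x a = E x a * g := fun g hg =>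
      ((StarSubalgebra.mem_centralizer_iff ℂ).1 hg (E x a) ⟨x, a, rfl⟩).1.symm
    exact ⟨h1 g hg, h1 _ (star_mem hg)⟩
  have hF𝓑 : ∀ y b, F y b ∈ 𝓑 := by
    intro y b
    rw [StarSubalgebra.mem_centralizer_iff]
    rintro _ ⟨x, a, rfl⟩
    rw [star_eq_conjTranspose, (hE x a).1.eq]
    exact ⟨hcomm x a y b, hcomm x a y b⟩
  have : FiniteDimensional ℂ 𝓐 := inferInstanceAs (FiniteDimensional ℂ 𝓐.toSubalgebra)
  have : FiniteDimensional ℂ 𝓑 := inferInstanceAs (FiniteDimensional ℂ 𝓑.toSubalgebra)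
  obtain ⟨ι, hι, hι'⟩ := exists_kronecker_rep 𝓐 𝓑
  obtain ⟨π, hπ⟩ := exists_mul_rep 𝓐 𝓑 fun a b =>
    (((StarSubalgebra.mem_centralizer_iff ℂ).1 a.2 b b.2).1).symm
  obtain ⟨σ, hσ, hσtr, hστ⟩ := exists_state_transfer ι hι π ρ hρ hρtr
  refine ⟨n, hn, E, F, σ, hE, hF, hEsum, hFsum, hσ, hσtr, fun x a y b => ?_⟩
  have h := hστ ((⟨E x a, hE𝓐 x a⟩ : 𝓐) ⊗ₜ[ℂ] (⟨F y b, hF𝓑 y b⟩ : 𝓑))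
  rwa [hι', hπ, ← mul_assoc] at h
end

section
/- The limit projection of an average of projections is absorbed by each projection: Let Q_1, …, Q_m be n×n complex matrices that are orthogonal projections (Hermitian idempotents), let T := (1/m) ∑_{x=1}^m Q_x, and let P := lim_{N→∞} T^N (this limit exists since T is Hermitian with 0 ≤ T ≤ 1). Then Q_x · P = P and P · Q_x = P for every x ∈ {1, …, m}. -/
/-! Passing to the limit in `T ^ (N + 1) = T * T ^ N` gives `T * P = P`, that is
`∑ x, (1 - Q x) * P = 0`. Multiplying by `Pᴴ` on the left and using that each `1 - Q x` is an
orthogonal projection turns this into `∑ x, ((1 - Q x) * P)ᴴ * ((1 - Q x) * P) = 0`. The traces of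
the summands are nonnegative, so each vanishes and `(1 - Q x) * P = 0`. As a limit of Hermitian
matrices `P` is Hermitian, so taking adjoints gives `P * Q x = P`. -/

open Matrix Filter

open scoped ComplexOrder in
/-- The orthogonal projections `R x` all kill `A` as soon as their sum does. -/
lemma proj_mul_eq_zero_of_sum {ι κ : Type*} [Fintype ι] [Fintype κ] (R : ι → Matrix κ κ ℂ)
    (hR : ∀ x, (R x).IsHermitian) (hR2 : ∀ x, R x * R x = R x) (A : Matrix κ κ ℂ)
    (h : (∑ x, R x) * A = 0) (x : ι) : R x * A = 0 := by
  have hsq : ∀ x, (R x * A)ᴴ * (R x * A) = Aᴴ * (R x * A) := fun x => by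
    rw [conjTranspose_mul, (hR x).eq, Matrix.mul_assoc, ← Matrix.mul_assoc (R x), hR2]
  have hsum : ∑ x, ((R x * A)ᴴ * (R x * A)).trace = 0 := by
    simp_rw [hsq, ← trace_sum, ← Matrix.mul_sum, ← Matrix.sum_mul, h]
    simp
  have hx := (Finset.sum_eq_zero_iff_of_nonneg fun y _ =>
    (posSemidef_conjTranspose_mul_self (R y * A)).trace_nonneg).1 hsum x (Finset.mem_univ x)
  exact trace_conjTranspose_mul_self_eq_zero_iff.1 hx

/-- The limit projection of an average of projections is absorbed by each
projection: `Q_x P = P Q_x = P`. -/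
theorem limit_projection_absorbed
    (n m : ℕ) (hm : 0 < m)
    (Q : Fin m → Matrix (Fin n) (Fin n) ℂ)
    (hherm : ∀ x, (Q x).IsHermitian)
    (hidem : ∀ x, Q x * Q x = Q x)
    (P : Matrix (Fin n) (Fin n) ℂ)
    (hP : ∀ i j, Tendsto
      (fun N : ℕ => (((1 / (m : ℂ)) • ∑ x, Q x) ^ N) i j) atTop (nhds (P i j))) :
    ∀ x, Q x * P = P ∧ P * Q x = P := by
  have hm0 : (m : ℂ) ≠ 0 := by exact_mod_cast hm.ne'
  set T := (1 / (m : ℂ)) • ∑ x, Q x with hT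
  have hlim : Tendsto (fun N : ℕ => T ^ N) atTop (nhds P) :=
    tendsto_pi_nhds.2 fun i => tendsto_pi_nhds.2 fun j => hP i j
  have hTP : T * P = P := by
    refine tendsto_nhds_unique (hlim.const_mul T) ?_
    simpa only [← pow_succ', Function.comp_def] using hlim.comp (tendsto_add_atTop_nat 1)
  have hTH : T.IsHermitian := by
    simp [hT, IsHermitian, conjTranspose_smul, conjTranspose_sum, fun x => (hherm x).eq]
  have hPH : Pᴴ = P := by
    have hc : Tendsto (fun N : ℕ => (T ^ N)ᴴ) atTop (nhds Pᴴ) :=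
      (continuous_id.matrix_conjTranspose.tendsto P).comp hlim
    simp only [conjTranspose_pow, hTH.eq] at hc
    exact tendsto_nhds_unique hc hlim
  have hsum : (∑ x, (1 - Q x)) * P = 0 := by
    have hQ : ∑ x, Q x = (m : ℂ) • T := by
      rw [hT, smul_smul, mul_one_div_cancel hm0, one_smul]
    rw [Finset.sum_sub_distrib, hQ, Matrix.sub_mul, Matrix.smul_mul, hTP]
    simp [← Nat.cast_smul_eq_nsmul ℂ]
  intro x
  have hx := proj_mul_eq_zero_of_sum (fun x => 1 - Q x) (fun x => isHermitian_one.sub (hherm x))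
    (fun x => by simp [Matrix.sub_mul, Matrix.mul_sub, hidem]) P hsum x
  have hQP : Q x * P = P := by
    rw [Matrix.sub_mul, Matrix.one_mul, sub_eq_zero] at hx
    exact hx.symm
  refine ⟨hQP, ?_⟩
  have := congrArg conjTranspose hQP
  rwa [conjTranspose_mul, hPH, (hherm x).eq] at this
end
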